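/- Mass scaling method of Olovsson et al.: with m = 24 degrees of freedom per element, let K = Σ_{e=1}^N L_e^T·K_e·L_e with each K_e ∈ ℝ^{24×24} symmetric positive semidefinite; for each e let m_e > 0 and set M_e = (m_e/8)·I_24 and E_e = I_3 ⊗ [(β·m_e/56)·(8·I_8 − e·e^T)], where e ∈ ℝ^8 is the all-ones vector and β ≥ 0; let M = Σ_{e=1}^N L_e^T·M_e·L_e and M̄ = Σ_{e=1}^N L_e^T·(M_e + E_e)·L_e. Then: (1) for every i = 1,…,n, λ_i(K, M̄) ≤ λ_i(K, M) ≤ (1 + 8β/7)·λ_i(K, M̄), i.e. 1 ≤ ω_i/ω̄_i ≤ √(1 + 8β/7) wherever ω̄_i > 0; and (2) κ(M̄)/κ(M) ≤ 1 + 8β/7. -/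

import Mathlib

open Matrix Kronecker

/-- The eigenvalues of a symmetric real matrix listed in ascending order with multiplicity. -/
noncomputable def sortedEigs {n : ℕ} (M : Matrix (Fin n) (Fin n) ℝ) : Fin n → ℝ :=
  if h : M.IsHermitian then h.eigenvalues ∘ Tuple.sort h.eigenvalues else 0

-- The generalized eigenvalues `λ_1(A,B) ≤ … ≤ λ_n(A,B)`: the eigenvalues of
-- `B^{-1/2} A B^{-1/2}` in ascending order with multiplicity (`B` positive definite).
open Classical in
open scoped MatrixOrder in
noncomputable def genEigs {n : ℕ} (A B : Matrix (Fin n) (Fin n) ℝ) : Fin n → ℝ :=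
  if hB : B.PosDef then sortedEigs ((CFC.sqrt B)⁻¹ * A * (CFC.sqrt B)⁻¹) else 0

/-- The spectral condition number `κ(A) = λ_max(A)/λ_min(A)`. -/
noncomputable def specCond {n : ℕ} (M : Matrix (Fin (n+1)) (Fin (n+1)) ℝ) : ℝ :=
  sortedEigs M (Fin.last n) / sortedEigs M 0

/-- The Boolean connectivity matrix `L_e` of an element whose local-to-global map is `σ`:
its rows are the standard basis vectors of `ℝ^n` selected by `σ`. -/
def elemL {ι : Type*} {n : ℕ} (σ : ι → Fin n) : Matrix ι (Fin n) ℝ :=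
  Matrix.of fun i j => if σ i = j then 1 else 0

lemma sortedEigs_diag {n : ℕ} {A : Matrix (Fin n) (Fin n) ℝ} (hA : A.IsHermitian) :
    Monotone (sortedEigs A) ∧ ∃ P : Matrix (Fin n) (Fin n) ℝ,
      Pᵀ * A * P = diagonal (sortedEigs A) ∧ Pᵀ * P = 1 := by
  have hs : sortedEigs A = hA.eigenvalues ∘ Tuple.sort hA.eigenvalues := by
    rw [sortedEigs, dif_pos hA]
  rw [hs]
  refine ⟨Tuple.monotone_sort _, ?_⟩
  have h1 := hA.conjStarAlgAut_star_eigenvectorUnitary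
  rw [Unitary.conjStarAlgAut_star_apply] at h1
  have h2 : star (hA.eigenvectorUnitary : Matrix (Fin n) (Fin n) ℝ) * hA.eigenvectorUnitary = 1 :=
    Unitary.coe_star_mul_self _
  set U : Matrix (Fin n) (Fin n) ℝ := hA.eigenvectorUnitary.1
  set s := Tuple.sort hA.eigenvalues
  have hU : star U = Uᵀ := by
    rw [star_eq_conjTranspose, conjTranspose_eq_transpose_of_trivial]
  rw [hU] at h1 h2
  refine ⟨U.submatrix id s, ?_, ?_⟩
  · have : (U.submatrix id s)ᵀ * A * U.submatrix id s = (Uᵀ * A * U).submatrix s s := by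
      ext i j
      simp [Matrix.mul_apply]
    rw [this, h1, submatrix_diagonal_equiv]
    rfl
  · have : (U.submatrix id s)ᵀ * U.submatrix id s = (Uᵀ * U).submatrix s s := by
      ext i j
      simp [Matrix.mul_apply]
    rw [this, h2, submatrix_one_equiv]

open scoped MatrixOrder in
lemma genEigs_diag {n : ℕ} {A B : Matrix (Fin n) (Fin n) ℝ} (hA : A.IsHermitian)
    (hB : B.PosDef) :
    Monotone (genEigs A B) ∧ ∃ P : Matrix (Fin n) (Fin n) ℝ, IsUnit P ∧
      Pᵀ * A * P = diagonal (genEigs A B) ∧ Pᵀ * B * P = 1 := by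
  have hg : genEigs A B = sortedEigs ((CFC.sqrt B)⁻¹ * A * (CFC.sqrt B)⁻¹) := by
    simp [genEigs, hB]
  have hss : CFC.sqrt B * CFC.sqrt B = B := CFC.sqrt_mul_sqrt_self B hB.posSemidef.nonneg
  have hsh : (CFC.sqrt B).IsHermitian := (CFC.sqrt_nonneg B).posSemidef.isHermitian
  set S := CFC.sqrt B
  have hSt : Sᵀ = S := by
    rw [← conjTranspose_eq_transpose_of_trivial]; exact hsh
  have hdet : IsUnit S.det := by
    have := hB.det_pos
    rw [← hss, det_mul] at this
    rw [isUnit_iff_ne_zero]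
    rintro h
    simp [h] at this
  have hit : (S⁻¹)ᵀ = S⁻¹ := by rw [transpose_nonsing_inv, hSt]
  have hAt : Aᵀ = A := by
    rw [← conjTranspose_eq_transpose_of_trivial]; exact hA
  have hC : (S⁻¹ * A * S⁻¹).IsHermitian := by
    rw [IsHermitian, conjTranspose_eq_transpose_of_trivial]
    simp [transpose_mul, hit, hAt, Matrix.mul_assoc]
  rw [hg]
  obtain ⟨hm, P, h1, h2⟩ := sortedEigs_diag hC
  have hPu : IsUnit P := IsUnit.of_mul_eq_one_right _ h2
  refine ⟨hm, S⁻¹ * P, ?_, ?_, ?_⟩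
  · refine IsUnit.mul ?_ hPu
    rw [Matrix.isUnit_iff_isUnit_det]
    exact isUnit_nonsing_inv_det _ hdet
  · rw [← h1, transpose_mul, hit]
    simp only [Matrix.mul_assoc]
  · rw [transpose_mul, hit, ← hss]
    calc Pᵀ * S⁻¹ * (S * S) * (S⁻¹ * P) = Pᵀ * (S⁻¹ * S) * (S * S⁻¹) * P := by
          simp only [Matrix.mul_assoc]
      _ = 1 := by rw [nonsing_inv_mul _ hdet, mul_nonsing_inv _ hdet]; simpa using h2

lemma quad_conj {n : ℕ} (P A : Matrix (Fin n) (Fin n) ℝ) (a : Fin n → ℝ) :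
    (P *ᵥ a) ⬝ᵥ (A *ᵥ (P *ᵥ a)) = a ⬝ᵥ ((Pᵀ * A * P) *ᵥ a) := by
  rw [Matrix.mul_assoc, ← mulVec_mulVec, ← mulVec_mulVec, dotProduct_mulVec a, vecMul_transpose]

/-- Common test vector for two simultaneous diagonalizations. -/
lemma exists_test {n : ℕ} {A B A' B' P Q : Matrix (Fin n) (Fin n) ℝ} {d d' : Fin n → ℝ}
    (hd : Monotone d) (hd' : Monotone d') (hPu : IsUnit P) (hQu : IsUnit Q)
    (h1 : Pᵀ * A * P = diagonal d) (h2 : Pᵀ * B * P = 1)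
    (h3 : Qᵀ * A' * Q = diagonal d') (h4 : Qᵀ * B' * Q = 1) (i : Fin n) :
    ∃ x : Fin n → ℝ, x ≠ 0 ∧ x ⬝ᵥ (A *ᵥ x) ≤ d i * (x ⬝ᵥ (B *ᵥ x)) ∧
      d' i * (x ⬝ᵥ (B' *ᵥ x)) ≤ x ⬝ᵥ (A' *ᵥ x) := by
  let f : (Fin n → ℝ) →ₗ[ℝ] ({j : Fin n // j ≠ i} → ℝ) :=
    LinearMap.pi fun j => if i < j.1 then (LinearMap.proj j.1) ∘ₗ (P⁻¹).mulVecLin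
      else (LinearMap.proj j.1) ∘ₗ (Q⁻¹).mulVecLin
  have hf : LinearMap.ker f ≠ ⊥ := by
    apply LinearMap.ker_ne_bot_of_finrank_lt
    simp only [Module.finrank_fintype_fun_eq_card]
    exact Fintype.card_subtype_lt (x := i) (by simp)
  obtain ⟨x, hx, hx0⟩ := Submodule.exists_mem_ne_zero_of_ne_bot hf
  have hfx : ∀ j : {j : Fin n // j ≠ i}, f x j = 0 := fun j => congrFun hx j
  have ha : ∀ j, i < j → (P⁻¹ *ᵥ x) j = 0 := by
    intro j hj
    have := hfx ⟨j, hj.ne'⟩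
    simpa [f, hj] using this
  have hb : ∀ j, j < i → (Q⁻¹ *ᵥ x) j = 0 := by
    intro j hj
    have := hfx ⟨j, hj.ne⟩
    simpa [f, hj.not_gt] using this
  have hxP : x = P *ᵥ (P⁻¹ *ᵥ x) := by
    rw [mulVec_mulVec, mul_nonsing_inv _ ((isUnit_iff_isUnit_det _).1 hPu), one_mulVec]
  have hxQ : x = Q *ᵥ (Q⁻¹ *ᵥ x) := by
    rw [mulVec_mulVec, mul_nonsing_inv _ ((isUnit_iff_isUnit_det _).1 hQu), one_mulVec]
  refine ⟨x, hx0, ?_, ?_⟩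
  · generalize P⁻¹ *ᵥ x = a at *
    rw [hxP, quad_conj, quad_conj, h1, h2, one_mulVec]
    simp only [dotProduct, mulVec_diagonal, Finset.mul_sum]
    refine Finset.sum_le_sum fun j _ => ?_
    rcases lt_or_ge i j with h | h
    · simp [ha j h]
    · nlinarith [hd h, mul_nonneg (sub_nonneg.2 (hd h)) (mul_self_nonneg (a j))]
  · generalize Q⁻¹ *ᵥ x = a at *
    rw [hxQ, quad_conj, quad_conj, h3, h4, one_mulVec]
    simp only [dotProduct, mulVec_diagonal, Finset.mul_sum]
    refine Finset.sum_le_sum fun j _ => ?_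
    rcases lt_or_ge j i with h | h
    · simp [hb j h]
    · nlinarith [hd' h, mul_nonneg (sub_nonneg.2 (hd' h)) (mul_self_nonneg (a j))]

lemma sortedEigs_test {n : ℕ} {A A' : Matrix (Fin n) (Fin n) ℝ}
    (hA : A.IsHermitian) (hA' : A'.IsHermitian) (i : Fin n) :
    ∃ x : Fin n → ℝ, 0 < x ⬝ᵥ x ∧ x ⬝ᵥ (A *ᵥ x) ≤ sortedEigs A i * (x ⬝ᵥ x) ∧
      sortedEigs A' i * (x ⬝ᵥ x) ≤ x ⬝ᵥ (A' *ᵥ x) := by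
  obtain ⟨hm, P, h1, h2⟩ := sortedEigs_diag hA
  obtain ⟨hm', Q, h3, h4⟩ := sortedEigs_diag hA'
  obtain ⟨x, hx, h⟩ := exists_test (B := 1) (B' := 1) hm hm'
    (IsUnit.of_mul_eq_one_right _ h2) (IsUnit.of_mul_eq_one_right _ h4)
    h1 (by simpa using h2) h3 (by simpa using h4) i
  simp only [one_mulVec] at h
  refine ⟨x, ?_, h⟩
  exact lt_of_le_of_ne (Finset.sum_nonneg fun j _ => mul_self_nonneg _)
    (fun h => hx (dotProduct_self_eq_zero.1 h.symm))

lemma genEigs_test {n : ℕ} {A B B' : Matrix (Fin n) (Fin n) ℝ}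
    (hA : A.IsHermitian) (hB : B.PosDef) (hB' : B'.PosDef) (i : Fin n) :
    ∃ x : Fin n → ℝ, x ≠ 0 ∧ x ⬝ᵥ (A *ᵥ x) ≤ genEigs A B i * (x ⬝ᵥ (B *ᵥ x)) ∧
      genEigs A B' i * (x ⬝ᵥ (B' *ᵥ x)) ≤ x ⬝ᵥ (A *ᵥ x) := by
  obtain ⟨hm, P, hP, h1, h2⟩ := genEigs_diag hA hB
  obtain ⟨hm', Q, hQ, h3, h4⟩ := genEigs_diag hA hB'
  exact exists_test hm hm' hP hQ h1 h2 h3 h4 i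

lemma genEigs_nonneg {n : ℕ} {A B : Matrix (Fin n) (Fin n) ℝ}
    (hA : A.PosSemidef) (hB : B.PosDef) (i : Fin n) : 0 ≤ genEigs A B i := by
  obtain ⟨x, hx, h1, -⟩ := genEigs_test hA.isHermitian hB hB i
  have h3 := hB.dotProduct_mulVec_pos hx
  have h4 := hA.dotProduct_mulVec_nonneg x
  simp only [star_trivial] at h3 h4
  by_contra! h
  nlinarith

/-- Abstract form of the bounds. -/
lemma abstract_bounds {n : ℕ} {K M Mbar : Matrix (Fin (n+1)) (Fin (n+1)) ℝ} {c : ℝ}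
    (hc : 0 ≤ c) (hK : K.PosSemidef) (hM : M.PosDef) (hMb : Mbar.PosDef)
    (hle : ∀ x : Fin (n+1) → ℝ, x ⬝ᵥ (M *ᵥ x) ≤ x ⬝ᵥ (Mbar *ᵥ x))
    (hge : ∀ x : Fin (n+1) → ℝ, x ⬝ᵥ (Mbar *ᵥ x) ≤ c * (x ⬝ᵥ (M *ᵥ x))) :
    (∀ i, genEigs K Mbar i ≤ genEigs K M i ∧ genEigs K M i ≤ c * genEigs K Mbar i) ∧
      specCond Mbar / specCond M ≤ c := by
  constructor
  · intro i
    have n1 := genEigs_nonneg hK hM i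
    have n2 := genEigs_nonneg hK hMb i
    constructor
    · obtain ⟨x, hx, h1, h2⟩ := genEigs_test hK.isHermitian hM hMb i
      have h3 := hMb.dotProduct_mulVec_pos hx
      simp only [star_trivial] at h3
      have h4 := mul_le_mul_of_nonneg_left (hle x) n1
      exact le_of_mul_le_mul_right (by linarith) h3
    · obtain ⟨x, hx, h1, h2⟩ := genEigs_test hK.isHermitian hMb hM i
      have h3 := hM.dotProduct_mulVec_pos hx
      simp only [star_trivial] at h3
      have h4 := mul_le_mul_of_nonneg_left (hge x) n2
      exact le_of_mul_le_mul_right (by linarith) h3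
  · have pos : ∀ {A : Matrix (Fin (n+1)) (Fin (n+1)) ℝ}, A.PosDef → ∀ i, 0 < sortedEigs A i := by
      intro A hA i
      obtain ⟨x, hx, h1, -⟩ := sortedEigs_test hA.isHermitian hA.isHermitian i
      have h3 := hA.dotProduct_mulVec_pos (x := x) (by rintro rfl; simp at hx)
      simp only [star_trivial] at h3
      by_contra! h
      nlinarith
    have e1 : sortedEigs M 0 ≤ sortedEigs Mbar 0 := by
      obtain ⟨x, hx, h1, h2⟩ := sortedEigs_test hMb.isHermitian hM.isHermitian 0
      exact le_of_mul_le_mul_right (by linarith [hle x]) hx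
    have e2 : sortedEigs Mbar (Fin.last n) ≤ c * sortedEigs M (Fin.last n) := by
      obtain ⟨x, hx, h1, h2⟩ := sortedEigs_test hM.isHermitian hMb.isHermitian (Fin.last n)
      have := mul_le_mul_of_nonneg_left h1 hc
      exact le_of_mul_le_mul_right (by linarith [hge x]) hx
    have p1 := pos hM 0
    have p2 := pos hMb 0
    have p3 := pos hM (Fin.last n)
    unfold specCond
    rw [div_le_iff₀ (by positivity), ← mul_div_assoc]
    exact div_le_div₀ (by positivity) e2 p1 e1

lemma elemL_mulVec {ι : Type*} {n : ℕ} (s : ι → Fin n) (x : Fin n → ℝ) :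
    elemL s *ᵥ x = x ∘ s := by
  ext i
  simp [elemL, mulVec, dotProduct]

lemma quad_assemble {κ ι : Type*} [Fintype κ] [Fintype ι] {n : ℕ} (s : κ → ι → Fin n)
    (A : κ → Matrix ι ι ℝ) (x : Fin n → ℝ) :
    x ⬝ᵥ ((∑ e, (elemL (s e))ᵀ * A e * elemL (s e)) *ᵥ x) =
      ∑ e, (x ∘ s e) ⬝ᵥ (A e *ᵥ (x ∘ s e)) := by
  rw [sum_mulVec, dotProduct_sum]
  refine Finset.sum_congr rfl fun e _ => ?_
  rw [Matrix.mul_assoc, ← mulVec_mulVec, ← mulVec_mulVec, dotProduct_mulVec, vecMul_transpose,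
    elemL_mulVec]

lemma herm_assemble {κ ι : Type*} [Fintype κ] [Fintype ι] {n : ℕ} (s : κ → ι → Fin n)
    (A : κ → Matrix ι ι ℝ) (hA : ∀ e, (A e).IsHermitian) :
    (∑ e, (elemL (s e))ᵀ * A e * elemL (s e)).IsHermitian := by
  rw [IsHermitian, conjTranspose_sum]
  refine Finset.sum_congr rfl fun e _ => ?_
  rw [← conjTranspose_eq_transpose_of_trivial]
  exact isHermitian_conjTranspose_mul_mul _ (hA e)

lemma quad_E (c : ℝ) (y : Fin 3 × Fin 8 → ℝ) :
    y ⬝ᵥ (((1 : Matrix (Fin 3) (Fin 3) ℝ) ⊗ₖ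
      (c • ((8 : ℝ) • (1 : Matrix (Fin 8) (Fin 8) ℝ) - Matrix.of fun _ _ => (1 : ℝ)))) *ᵥ y) =
    c * (8 * (y ⬝ᵥ y) - ∑ a, (∑ b, y (a, b)) ^ 2) := by
  have h : ∀ a b, (((1 : Matrix (Fin 3) (Fin 3) ℝ) ⊗ₖ
      (c • ((8 : ℝ) • (1 : Matrix (Fin 8) (Fin 8) ℝ) - Matrix.of fun _ _ => (1 : ℝ)))) *ᵥ y) (a, b)
      = c * (8 * y (a, b) - ∑ b', y (a, b')) := by
    intro a b
    simp only [mulVec, dotProduct, Fintype.sum_prod_type, kroneckerMap_apply, one_apply,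
      Matrix.smul_apply, Matrix.sub_apply, of_apply, smul_eq_mul]
    rw [Finset.sum_eq_single a (by intro a' _ h; simp [h.symm]) (by simp)]
    simp only [if_true, one_mul, mul_assoc, ← Finset.mul_sum, sub_mul, Finset.sum_sub_distrib]
    simp
  simp only [dotProduct, Fintype.sum_prod_type, h]
  rw [Finset.mul_sum, ← Finset.sum_sub_distrib, Finset.mul_sum]
  refine Finset.sum_congr rfl fun a _ => ?_
  simp only [mul_sub, Finset.sum_sub_distrib, sq, Finset.sum_mul, Finset.mul_sum]
  congr 1
  · exact Finset.sum_congr rfl fun b _ => by ring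
  · exact Finset.sum_congr rfl fun b _ => Finset.sum_congr rfl fun b' _ => by ring

/-- **Mass scaling of Olovsson et al. (2005)** (Corollary `bounds_olovsson`).
Elements have `m = 24 = 3·8` degrees of freedom (index type `Fin 3 × Fin 8`). With
`M_e = (m_e/8)·I_24`, `E_e = I_3 ⊗ ((β·m_e/56)·(8·I_8 − e·eᵀ))` (`e` the all-ones vector,
`β ≥ 0`), `K = Σ_e L_eᵀ·K_e·L_e` (each `K_e ⪰ 0` symmetric), `M = Σ_e L_eᵀ·M_e·L_e` and
`M̄ = Σ_e L_eᵀ·(M_e + E_e)·L_e`, one has for every `i`: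
`λ_i(K,M̄) ≤ λ_i(K,M) ≤ (1 + 8β/7)·λ_i(K,M̄)` (equivalently `1 ≤ ω_i/ω̄_i ≤ √(1+8β/7)`
wherever `ω̄_i > 0`), and `κ(M̄)/κ(M) ≤ 1 + 8β/7`. -/
theorem olovsson_mass_scaling_bounds {N n pmax : ℕ} (hpmax : 0 < pmax)
    (β : ℝ) (hβ : 0 ≤ β)
    (σ : Fin (N+1) → (Fin 3 × Fin 8) → Fin (n+1))
    (hinj : ∀ e, Function.Injective (σ e))
    (hcover : ∀ i : Fin (n+1), ∃ e j, σ e j = i)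
    (hp : ∀ i : Fin (n+1), (Finset.univ.filter fun e => ∃ j, σ e j = i).card ≤ pmax)
    (Ke : Fin (N+1) → Matrix (Fin 3 × Fin 8) (Fin 3 × Fin 8) ℝ)
    (hKe : ∀ e, (Ke e).PosSemidef)
    (me : Fin (N+1) → ℝ) (hme : ∀ e, 0 < me e)
    (Me Ee : Fin (N+1) → Matrix (Fin 3 × Fin 8) (Fin 3 × Fin 8) ℝ)
    (hMe : ∀ e, Me e = (me e / 8) • (1 : Matrix (Fin 3 × Fin 8) (Fin 3 × Fin 8) ℝ))
    (hEe : ∀ e, Ee e = (1 : Matrix (Fin 3) (Fin 3) ℝ) ⊗ₖ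
      ((β * me e / 56) • ((8 : ℝ) • (1 : Matrix (Fin 8) (Fin 8) ℝ) -
        Matrix.of fun _ _ => (1 : ℝ))))
    (K M Mbar : Matrix (Fin (n+1)) (Fin (n+1)) ℝ)
    (hK : K = ∑ e, (elemL (σ e))ᵀ * Ke e * elemL (σ e))
    (hM : M = ∑ e, (elemL (σ e))ᵀ * Me e * elemL (σ e))
    (hMbar : Mbar = ∑ e, (elemL (σ e))ᵀ * (Me e + Ee e) * elemL (σ e)) :
    (∀ i : Fin (n+1),
      (genEigs K Mbar i ≤ genEigs K M i ∧
        genEigs K M i ≤ (1 + 8 * β / 7) * genEigs K Mbar i) ∧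
      (0 < genEigs K Mbar i →
        1 ≤ Real.sqrt (genEigs K M i) / Real.sqrt (genEigs K Mbar i) ∧
        Real.sqrt (genEigs K M i) / Real.sqrt (genEigs K Mbar i) ≤
          Real.sqrt (1 + 8 * β / 7))) ∧
    specCond Mbar / specCond M ≤ 1 + 8 * β / 7 := by
  have hE : ∀ e (y : Fin 3 × Fin 8 → ℝ), 0 ≤ y ⬝ᵥ (Ee e *ᵥ y) ∧
      y ⬝ᵥ (Ee e *ᵥ y) ≤ 8 * β / 7 * (y ⬝ᵥ (Me e *ᵥ y)) := by
    intro e y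
    rw [hEe, hMe, quad_E, smul_mulVec, one_mulVec, dotProduct_smul, smul_eq_mul]
    have hc : 0 ≤ β * me e / 56 := by have := hme e; positivity
    have h1 : 0 ≤ ∑ a, (∑ b, y (a, b)) ^ 2 := Finset.sum_nonneg fun a _ => sq_nonneg _
    have h2 : ∑ a, (∑ b, y (a, b)) ^ 2 ≤ 8 * (y ⬝ᵥ y) := by
      rw [dotProduct, Fintype.sum_prod_type, Finset.mul_sum]
      refine Finset.sum_le_sum fun a _ => ?_
      have := sq_sum_le_card_mul_sum_sq (s := Finset.univ) (f := fun b : Fin 8 => y (a, b))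
      simpa [sq] using this
    constructor
    · exact mul_nonneg hc (by linarith)
    · nlinarith [mul_nonneg hc h1]
  have hMq : ∀ e (y : Fin 3 × Fin 8 → ℝ), y ⬝ᵥ (Me e *ᵥ y) = me e / 8 * (y ⬝ᵥ y) := by
    intro e y
    rw [hMe, smul_mulVec, one_mulVec, dotProduct_smul, smul_eq_mul]
  have hMeH : ∀ e, (Me e).IsHermitian := by
    intro e
    rw [hMe, IsHermitian]
    simp
  have hEeH : ∀ e, (Ee e).IsHermitian := by
    intro e
    rw [hEe, IsHermitian]
    ext ⟨a, b⟩ ⟨a', b'⟩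
    simp [one_apply, eq_comm]
  have hKp : K.PosSemidef := by
    rw [hK]
    refine .of_dotProduct_mulVec_nonneg (herm_assemble _ _ fun e => (hKe e).isHermitian) fun x => ?_
    rw [star_trivial, quad_assemble]
    exact Finset.sum_nonneg fun e _ => by
      simpa using (hKe e).dotProduct_mulVec_nonneg (x ∘ σ e)
  have hnn : ∀ e (y : Fin 3 × Fin 8 → ℝ), 0 ≤ me e / 8 * (y ⬝ᵥ y) := fun e y =>
    mul_nonneg (by have := hme e; positivity) (Finset.sum_nonneg fun j _ => mul_self_nonneg _)
  have hMpos : ∀ x : Fin (n+1) → ℝ, x ≠ 0 → 0 < x ⬝ᵥ (M *ᵥ x) := by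
    intro x hx
    rw [hM, quad_assemble]
    simp only [hMq]
    obtain ⟨i, hi⟩ := Function.ne_iff.1 hx
    obtain ⟨e, j, rfl⟩ := hcover i
    refine Finset.sum_pos' (fun e _ => hnn e _) ⟨e, Finset.mem_univ _, ?_⟩
    refine mul_pos (by have := hme e; positivity) ?_
    refine Finset.sum_pos' (fun j _ => mul_self_nonneg _) ⟨j, Finset.mem_univ _, ?_⟩
    exact mul_self_pos.2 hi
  have hle : ∀ x : Fin (n+1) → ℝ, x ⬝ᵥ (M *ᵥ x) ≤ x ⬝ᵥ (Mbar *ᵥ x) := by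
    intro x
    rw [hM, hMbar, quad_assemble, quad_assemble]
    refine Finset.sum_le_sum fun e _ => ?_
    rw [add_mulVec, dotProduct_add]
    linarith [(hE e (x ∘ σ e)).1]
  have hge : ∀ x : Fin (n+1) → ℝ,
      x ⬝ᵥ (Mbar *ᵥ x) ≤ (1 + 8 * β / 7) * (x ⬝ᵥ (M *ᵥ x)) := by
    intro x
    rw [hM, hMbar, quad_assemble, quad_assemble, Finset.mul_sum]
    refine Finset.sum_le_sum fun e _ => ?_
    rw [add_mulVec, dotProduct_add]
    linarith [(hE e (x ∘ σ e)).2]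
  have hMp : M.PosDef := .of_dotProduct_mulVec_pos (by rw [hM]; exact herm_assemble _ _ hMeH)
    fun x hx => by simpa using hMpos x hx
  have hMbp : Mbar.PosDef := .of_dotProduct_mulVec_pos
    (by rw [hMbar]; exact herm_assemble _ _ fun e => (hMeH e).add (hEeH e))
    fun x hx => by simpa using (hMpos x hx).trans_le (hle x)
  obtain ⟨h1, h2⟩ := abstract_bounds (by positivity) hKp hMp hMbp hle hge
  refine ⟨fun i => ⟨h1 i, fun hpos => ?_⟩, h2⟩
  have hs := Real.sqrt_pos.2 hpos
  constructor
  · rw [le_div_iff₀ hs, one_mul]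
    exact Real.sqrt_le_sqrt (h1 i).1
  · rw [div_le_iff₀ hs, ← Real.sqrt_mul (by positivity)]
    exact Real.sqrt_le_sqrt (h1 i).2
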